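/- Let m, M ≥ 1, 0 < σ < 1, 1 ≤ p < ∞ and c > 0. Let Ω ⊂ ℝ^m be an open set such that |B^m_λ(z) ∩ Ω| ≥ c λ^m for every z ∈ Ω and every 0 < λ ≤ (1/2) diam Ω. Let u : Ω → ℝ be measurable and define w : Ω → [0, +∞] by w(x) = ∫_Ω |u(x) − u(y)|^p / |x − y|^{m+σp} dy. Then there is a constant C > 0 depending only on m, M, σ, p and c such that for every open set ω ⊂ ℝ^M and every Lipschitz map γ : ω → Ω with w ∘ γ summable on ω, one has |u ∘ γ|_{W^{σ,p}(ω)} ≤ C (Lip γ)^σ (∫_ω w ∘ γ)^{1/p}, where Lip γ is the Lipschitz seminorm of γ. -/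

import Mathlib

open MeasureTheory Set Metric
open scoped ENNReal NNReal
noncomputable section

/-- `ℝ^m` with the Euclidean norm. -/
abbrev Eucl (n : ℕ) : Type := EuclideanSpace ℝ (Fin n)

/-- The `p`-th power of the Gagliardo seminorm on a subset of `ℝ^M`. -/
noncomputable def gagliardoPow (M : ℕ) (σ p : ℝ) (A : Set (Eucl M)) (u : Eucl M → ℝ) : ℝ≥0∞ :=
  ∫⁻ x in A, ∫⁻ y in A, (‖u x - u y‖₊ : ℝ≥0∞) ^ p / (‖x - y‖₊ : ℝ≥0∞) ^ ((M : ℝ) + σ * p)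

/-- The Gagliardo seminorm `|u|_{W^{σ,p}(A)}`. -/
noncomputable def gagliardoSeminorm (M : ℕ) (σ p : ℝ) (A : Set (Eucl M)) (u : Eucl M → ℝ) :
    ℝ≥0∞ :=
  gagliardoPow M σ p A u ^ (1 / p)

/-- The detector `w(x) = ∫_Ω |u(x) - u(y)|^p / |x - y|^{m + σp} dy`. -/
noncomputable def fugledeDetector (m : ℕ) (σ p : ℝ) (Ω : Set (Eucl m)) (u : Eucl m → ℝ)
    (x : Eucl m) : ℝ≥0∞ :=
  ∫⁻ y in Ω, (‖u x - u y‖₊ : ℝ≥0∞) ^ p / (‖x - y‖₊ : ℝ≥0∞) ^ ((m : ℝ) + σ * p)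


lemma fd_tail (M : ℕ) (r : ℝ) (hr : (M : ℝ) < r) : ∃ C : ℝ≥0∞, C ≠ ⊤ ∧ ∀ t : ℝ, 0 < t →
    ∫⁻ v : Eucl M, (if t < ‖v‖ then ‖v‖ₑ ^ (-r) else 0) ≤ C * ENNReal.ofReal t ^ ((M : ℝ) - r) := by
  have hr0 : 0 < r := lt_of_le_of_lt (Nat.cast_nonneg M) hr
  refine ⟨ENNReal.ofReal (2 ^ r) * ∫⁻ v : Eucl M, ENNReal.ofReal ((1 + ‖v‖) ^ (-r)), ?_, ?_⟩
  · refine ENNReal.mul_ne_top ENNReal.ofReal_ne_top (ne_of_lt ?_)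
    apply finite_integral_one_add_norm
    simpa using hr
  intro t ht
  set g : Eucl M → ℝ≥0∞ := fun v => if t < ‖v‖ then ‖v‖ₑ ^ (-r) else 0 with hg
  have hgm : Measurable g := by
    apply Measurable.ite
    · exact measurableSet_lt measurable_const measurable_norm
    · exact measurable_enorm.pow_const _
    · exact measurable_const
  have hmap := Measure.map_addHaar_smul (volume : Measure (Eucl M)) ht.ne'
  have h1 : ENNReal.ofReal ((t ^ M)⁻¹) * ∫⁻ v, g v = ∫⁻ v, g (t • v) := by
    rw [← lintegral_map hgm (measurable_const_smul t), hmap, lintegral_smul_measure]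
    have : (0:ℝ) < (t ^ M)⁻¹ := by positivity
    simp [abs_of_pos ht]
  have h2 : ∀ v, g (t • v) ≤ ENNReal.ofReal t ^ (-r) * (ENNReal.ofReal (2 ^ r) *
      ENNReal.ofReal ((1 + ‖v‖) ^ (-r))) := by
    intro v
    simp only [hg]
    split_ifs with h
    · rw [norm_smul, Real.norm_of_nonneg ht.le] at h
      have hv : 1 < ‖v‖ := by nlinarith
      rw [enorm_smul, Real.enorm_of_nonneg ht.le, ENNReal.mul_rpow_of_ne_top (by simp) (by simp)]
      gcongr
      rw [← ofReal_norm, ENNReal.ofReal_rpow_of_pos (by linarith),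
        ← ENNReal.ofReal_mul (by positivity)]
      apply ENNReal.ofReal_le_ofReal
      have h3 : ‖v‖ ^ (-r) ≤ ((1 + ‖v‖) / 2) ^ (-r) :=
        Real.rpow_le_rpow_of_nonpos (by positivity) (by linarith) (by linarith)
      refine h3.trans (le_of_eq ?_)
      rw [Real.div_rpow (by positivity) (by norm_num), Real.rpow_neg (by norm_num : (0:ℝ) ≤ 2)]
      field_simp
    · simp
  have h4 : ∫⁻ v, g v = ENNReal.ofReal (t ^ M) * ∫⁻ v, g (t • v) := by
    rw [← h1, ← mul_assoc, ← ENNReal.ofReal_mul (by positivity), mul_inv_cancel₀ (by positivity)]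
    simp
  rw [h4]
  calc ENNReal.ofReal (t ^ M) * ∫⁻ v, g (t • v)
      ≤ ENNReal.ofReal (t ^ M) * ∫⁻ v : Eucl M, ENNReal.ofReal t ^ (-r) * (ENNReal.ofReal (2 ^ r) *
      ENNReal.ofReal ((1 + ‖v‖) ^ (-r))) := by gcongr; exact h2 _
    _ = _ := by
      have ht' : ENNReal.ofReal t ≠ 0 := by simpa using ht
      rw [lintegral_const_mul' _ _ (ENNReal.rpow_ne_top_of_ne_zero ht' (by simp)),
        lintegral_const_mul' _ _ (by simp), sub_eq_add_neg,
        ENNReal.rpow_add _ _ ht' (by simp), ENNReal.rpow_natCast, ENNReal.ofReal_pow ht.le]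
      ring

/-- The truncated average. -/
noncomputable def fdG (m : ℕ) (p : ℝ) (Ω : Set (Eucl m)) (u : Eucl m → ℝ) (a : Eucl m) (R : ℝ) :
    ℝ≥0∞ :=
  ∫⁻ z in Ω, (if 2 * ‖a - z‖ < 3 * R then ‖u a - u z‖ₑ ^ p * ‖a - z‖ₑ ^ (-(m : ℝ)) else 0)

lemma fd_meas_integrand {α : Type*} [MeasurableSpace α] (m : ℕ) (p : ℝ) (u : Eucl m → ℝ)
    (hu : Measurable u) (A Z : α → Eucl m) (R : α → ℝ) (hA : Measurable A) (hZ : Measurable Z)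
    (hR : Measurable R) :
    Measurable (fun q : α =>
      (if 2 * ‖A q - Z q‖ < 3 * R q then
        ‖u (A q) - u (Z q)‖ₑ ^ p * ‖A q - Z q‖ₑ ^ (-(m : ℝ)) else (0 : ℝ≥0∞))) := by
  apply Measurable.ite
  · apply measurableSet_lt <;> fun_prop
  · fun_prop
  · exact measurable_const

lemma fd_meas_G {α : Type*} [MeasurableSpace α] (m : ℕ) (p : ℝ) (Ω : Set (Eucl m))
    (u : Eucl m → ℝ) (hu : Measurable u) (A : α → Eucl m) (R : α → ℝ) (hA : Measurable A)
    (hR : Measurable R) : Measurable (fun q : α => fdG m p Ω u (A q) (R q)) := by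
  unfold fdG
  exact Measurable.lintegral_prod_right' (ν := volume.restrict Ω)
    (fd_meas_integrand m p u hu (fun q : α × Eucl m => A q.1) (fun q => q.2) (fun q => R q.1)
      (hA.comp measurable_fst) measurable_snd (hR.comp measurable_fst))

lemma fd_avg (m : ℕ) (p c : ℝ) (hp : 1 ≤ p) (hc : 0 < c) (Ω : Set (Eucl m)) (hΩ : IsOpen Ω)
    (hreg : ∀ z ∈ Ω, ∀ lam : ℝ, 0 < lam → 2 * ENNReal.ofReal lam ≤ EMetric.diam Ω →
          ENNReal.ofReal (c * lam ^ m) ≤ volume (Metric.ball z lam ∩ Ω))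
    (u : Eucl m → ℝ) (hu : Measurable u) (a b : Eucl m) (ha : a ∈ Ω) (hb : b ∈ Ω)
    (R : ℝ) (hR : ‖a - b‖ ≤ R) :
    ‖u a - u b‖ₑ ^ p ≤ (2 ^ (p - 1) * ENNReal.ofReal (3 ^ m / c)) *
      (fdG m p Ω u a R + fdG m p Ω u b R) := by
  by_cases hab : a = b
  · subst hab
    simp [ENNReal.zero_rpow_of_pos (by linarith : 0 < p)]
  have hpos : 0 < ‖a - b‖ := norm_pos_iff.mpr (sub_ne_zero.mpr hab)
  set l := ‖a - b‖ / 2 with hl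
  have hl0 : 0 < l := by positivity
  have hdiam : 2 * ENNReal.ofReal l ≤ EMetric.diam Ω := by
    have : 2 * ENNReal.ofReal l = edist a b := by
      have h2 : (2 : ℝ≥0∞) * ENNReal.ofReal l = ENNReal.ofReal (2 * l) := by
        rw [ENNReal.ofReal_mul (by norm_num)]; simp
      rw [edist_dist, dist_eq_norm, h2]
      congr 1; rw [hl]; ring
    rw [this]
    exact Metric.edist_le_ediam_of_mem ha hb
  have hV := hreg a ha l hl0 hdiam
  set q := ENNReal.ofReal (c * l ^ m) with hq
  have hq0 : q ≠ 0 := by rw [hq]; simp; positivity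
  rw [← ENNReal.mul_le_mul_iff_left hq0 ENNReal.ofReal_ne_top]
  have hsm : MeasurableSet (Metric.ball a l ∩ Ω) := measurableSet_ball.inter hΩ.measurableSet
  have key : ∀ d z : Eucl m, ‖d - z‖ ≤ 3 * l → ‖u d - u z‖ₑ ^ p ≤
      ENNReal.ofReal ((3 * l) ^ m) * (‖u d - u z‖ₑ ^ p * ‖d - z‖ₑ ^ (-(m : ℝ))) := by
    intro d z h
    by_cases hdz : d = z
    · subst hdz
      simp [ENNReal.zero_rpow_of_pos (by linarith : 0 < p)]
    have h0 : ‖d - z‖ₑ ≠ 0 := by simpa [sub_eq_zero] using hdz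
    have h1 : 1 ≤ ENNReal.ofReal ((3 * l) ^ m) * ‖d - z‖ₑ ^ (-(m : ℝ)) := by
      rw [ENNReal.rpow_neg, ENNReal.rpow_natCast, ← div_eq_mul_inv,
        ENNReal.le_div_iff_mul_le (Or.inl (by simp [h0])) (Or.inl (by simp)), one_mul,
        ← ofReal_norm, ← ENNReal.ofReal_pow (norm_nonneg _)]
      apply ENNReal.ofReal_le_ofReal
      gcongr
    calc ‖u d - u z‖ₑ ^ p = ‖u d - u z‖ₑ ^ p * 1 := (mul_one _).symm
      _ ≤ ‖u d - u z‖ₑ ^ p * (ENNReal.ofReal ((3 * l) ^ m) * ‖d - z‖ₑ ^ (-(m : ℝ))) := by gcongr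
      _ = _ := by ring
  have hGm : ∀ d, Measurable (fun z => (if 2 * ‖d - z‖ < 3 * R then
      ‖u d - u z‖ₑ ^ p * ‖d - z‖ₑ ^ (-(m : ℝ)) else (0 : ℝ≥0∞))) := fun d =>
    fd_meas_integrand m p u hu (fun _ => d) (fun z => z) (fun _ => R) measurable_const
      measurable_id measurable_const
  have e1 : ENNReal.ofReal ((3 * l) ^ m) = ENNReal.ofReal (3 ^ m / c) * q := by
    rw [hq, ← ENNReal.ofReal_mul (by positivity)]
    congr 1; rw [mul_pow]; field_simp
  calc ‖u a - u b‖ₑ ^ p * q ≤ ‖u a - u b‖ₑ ^ p * volume (Metric.ball a l ∩ Ω) := by gcongr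
    _ = ∫⁻ z in Metric.ball a l ∩ Ω, ‖u a - u b‖ₑ ^ p := by simp
    _ ≤ ∫⁻ z in Metric.ball a l ∩ Ω, (2 ^ (p - 1) * ENNReal.ofReal ((3 * l) ^ m)) *
        ((if 2 * ‖a - z‖ < 3 * R then ‖u a - u z‖ₑ ^ p * ‖a - z‖ₑ ^ (-(m : ℝ)) else 0) +
        (if 2 * ‖b - z‖ < 3 * R then ‖u b - u z‖ₑ ^ p * ‖b - z‖ₑ ^ (-(m : ℝ)) else 0)) := by
      apply setLIntegral_mono' hsm
      rintro z ⟨hz, -⟩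
      rw [mem_ball, dist_comm, dist_eq_norm] at hz
      have hbz : ‖b - z‖ < 3 * l := by
        have : ‖b - z‖ ≤ ‖a - b‖ + ‖a - z‖ := by
          rw [norm_sub_rev a b]; exact norm_sub_le_norm_sub_add_norm_sub _ _ _
        linarith
      rw [if_pos (by linarith), if_pos (by linarith)]
      calc ‖u a - u b‖ₑ ^ p ≤ (‖u a - u z‖ₑ + ‖u b - u z‖ₑ) ^ p := by
            gcongr
            rw [show u a - u b = (u a - u z) - (u b - u z) by ring]
            exact enorm_sub_le
        _ ≤ 2 ^ (p - 1) * (‖u a - u z‖ₑ ^ p + ‖u b - u z‖ₑ ^ p) :=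
            ENNReal.rpow_add_le_mul_rpow_add_rpow _ _ hp
        _ ≤ 2 ^ (p - 1) * (ENNReal.ofReal ((3 * l) ^ m) *
              (‖u a - u z‖ₑ ^ p * ‖a - z‖ₑ ^ (-(m : ℝ))) + ENNReal.ofReal ((3 * l) ^ m) *
              (‖u b - u z‖ₑ ^ p * ‖b - z‖ₑ ^ (-(m : ℝ)))) :=
            mul_le_mul_right (add_le_add (key a z (by linarith)) (key b z hbz.le)) _
        _ = _ := by ring
    _ ≤ ∫⁻ z in Ω, (2 ^ (p - 1) * ENNReal.ofReal ((3 * l) ^ m)) *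
        ((if 2 * ‖a - z‖ < 3 * R then ‖u a - u z‖ₑ ^ p * ‖a - z‖ₑ ^ (-(m : ℝ)) else 0) +
        (if 2 * ‖b - z‖ < 3 * R then ‖u b - u z‖ₑ ^ p * ‖b - z‖ₑ ^ (-(m : ℝ)) else 0)) :=
      lintegral_mono_set inter_subset_right
    _ = (2 ^ (p - 1) * ENNReal.ofReal ((3 * l) ^ m)) * (fdG m p Ω u a R + fdG m p Ω u b R) := by
      have hct : (2 ^ (p - 1) * ENNReal.ofReal ((3 * l) ^ m) : ℝ≥0∞) ≠ ⊤ := ENNReal.mul_ne_top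
        (ENNReal.rpow_ne_top_of_nonneg (by linarith) (by simp)) (by simp)
      rw [lintegral_const_mul' _ _ hct, lintegral_add_left (hGm a)]
      rfl
    _ = _ := by rw [e1]; ring

/-- Integrating the truncated average against the kernel. -/
lemma fd_int (m M : ℕ) (σ p : ℝ) (hσ0 : 0 < σ) (hp : 1 ≤ p) (C : ℝ≥0∞)
    (hC : ∀ t : ℝ, 0 < t → ∫⁻ v : Eucl M, (if t < ‖v‖ then ‖v‖ₑ ^ (-((M : ℝ) + σ * p)) else 0)
      ≤ C * ENNReal.ofReal t ^ ((M : ℝ) - ((M : ℝ) + σ * p)))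
    (Ω : Set (Eucl m)) (u : Eucl m → ℝ) (hu : Measurable u) (a : Eucl m) (K : ℝ≥0) (x : Eucl M) :
    ∫⁻ y, fdG m p Ω u a (K * ‖x - y‖) * ‖x - y‖ₑ ^ (-((M : ℝ) + σ * p)) ≤
      (C * ENNReal.ofReal (3 / 2) ^ (σ * p) * (K : ℝ≥0∞) ^ (σ * p)) *
        fugledeDetector m σ p Ω u a := by
  have hsp : 0 < σ * p := by positivity
  rw [lintegral_sub_left_eq_self
    (fun v : Eucl M => fdG m p Ω u a (K * ‖v‖) * ‖v‖ₑ ^ (-((M : ℝ) + σ * p))) x]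
  have hm1 : Measurable (fun q : Eucl M × Eucl m =>
      (if 2 * ‖a - q.2‖ < 3 * (K * ‖q.1‖) then
        ‖u a - u q.2‖ₑ ^ p * ‖a - q.2‖ₑ ^ (-(m : ℝ)) else (0 : ℝ≥0∞))) := by
    have hmR : Measurable (fun q : Eucl M × Eucl m => (K : ℝ) * ‖q.1‖) :=
      (measurable_norm.comp measurable_fst).const_mul _
    exact fd_meas_integrand m p u hu (fun _ : Eucl M × Eucl m => a)
      (fun q : Eucl M × Eucl m => q.2) (fun q : Eucl M × Eucl m => (K : ℝ) * ‖q.1‖)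
      measurable_const measurable_snd hmR
  have h1 : ∀ v : Eucl M, fdG m p Ω u a (K * ‖v‖) * ‖v‖ₑ ^ (-((M : ℝ) + σ * p)) =
      ∫⁻ z in Ω, (if 2 * ‖a - z‖ < 3 * (K * ‖v‖) then
        ‖u a - u z‖ₑ ^ p * ‖a - z‖ₑ ^ (-(m : ℝ)) else (0 : ℝ≥0∞)) *
        ‖v‖ₑ ^ (-((M : ℝ) + σ * p)) := by
    intro v
    have hmv : Measurable (fun z : Eucl m => (if 2 * ‖a - z‖ < 3 * ((K : ℝ) * ‖v‖) then
        ‖u a - u z‖ₑ ^ p * ‖a - z‖ₑ ^ (-(m : ℝ)) else (0 : ℝ≥0∞))) :=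
      fd_meas_integrand m p u hu (fun _ => a) (fun z => z) (fun _ => (K : ℝ) * ‖v‖)
        measurable_const measurable_id measurable_const
    rw [lintegral_mul_const _ hmv, fdG]
  rw [lintegral_congr h1]
  rw [lintegral_lintegral_swap]
  swap
  · have hm2 : Measurable (fun q : Eucl M × Eucl m => ‖q.1‖ₑ ^ (-((M : ℝ) + σ * p))) := by
      fun_prop
    exact (hm1.mul hm2).aemeasurable
  rw [fugledeDetector, ← lintegral_const_mul]
  swap
  · simp only [← enorm_eq_nnnorm]
    fun_prop
  apply lintegral_mono
  intro z
  simp only [← enorm_eq_nnnorm]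
  by_cases haz : a = z
  · subst haz
    simp [ENNReal.zero_rpow_of_pos (by linarith : 0 < p)]
  have hD : 0 < ‖a - z‖ := norm_pos_iff.mpr (sub_ne_zero.mpr haz)
  have hDe : ‖a - z‖ₑ ≠ 0 := by simpa [sub_eq_zero] using haz
  have hA : ‖u a - u z‖ₑ ^ p * ‖a - z‖ₑ ^ (-(m : ℝ)) ≠ ⊤ :=
    ENNReal.mul_ne_top (ENNReal.rpow_ne_top_of_nonneg (by linarith) (by simp))
      (ENNReal.rpow_ne_top_of_ne_zero hDe (by simp))
  rcases eq_or_ne K 0 with hK | hK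
  · subst hK
    have : ∀ v : Eucl M, ¬ (2 * ‖a - z‖ < 3 * (((0 : ℝ≥0) : ℝ) * ‖v‖)) := by
      intro v; simp
    have h0 : ∀ v : Eucl M, (if 2 * ‖a - z‖ < 3 * (((0 : ℝ≥0) : ℝ) * ‖v‖) then
        ‖u a - u z‖ₑ ^ p * ‖a - z‖ₑ ^ (-(m : ℝ)) else (0 : ℝ≥0∞)) *
        ‖v‖ₑ ^ (-((M : ℝ) + σ * p)) = 0 := by
      intro v
      rw [if_neg (this v), zero_mul]
    rw [lintegral_congr h0]
    simp
  have hK' : (0 : ℝ) < K := by exact_mod_cast pos_iff_ne_zero.mpr hK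
  have hKe : (K : ℝ≥0∞) ≠ 0 := by exact_mod_cast hK
  set t : ℝ := ‖a - z‖ / (3 / 2 * K) with ht
  have ht0 : 0 < t := by positivity
  have h2 : ∀ v : Eucl M, (if 2 * ‖a - z‖ < 3 * (K * ‖v‖) then
        ‖u a - u z‖ₑ ^ p * ‖a - z‖ₑ ^ (-(m : ℝ)) else (0 : ℝ≥0∞)) *
        ‖v‖ₑ ^ (-((M : ℝ) + σ * p)) = (‖u a - u z‖ₑ ^ p * ‖a - z‖ₑ ^ (-(m : ℝ))) *
        (if t < ‖v‖ then ‖v‖ₑ ^ (-((M : ℝ) + σ * p)) else 0) := by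
    intro v
    have : t < ‖v‖ ↔ 2 * ‖a - z‖ < 3 * (K * ‖v‖) := by
      rw [ht, div_lt_iff₀ (by positivity)]
      constructor <;> intro h <;> nlinarith
    by_cases h : t < ‖v‖
    · rw [if_pos h, if_pos (this.mp h)]
    · rw [if_neg h, if_neg (fun h' => h (this.mpr h'))]; simp
  rw [lintegral_congr h2]
  rw [lintegral_const_mul' _ _ hA]
  refine (mul_le_mul_right (hC t ht0) _).trans (le_of_eq ?_)
  have e1 : ENNReal.ofReal t ^ ((M : ℝ) - ((M : ℝ) + σ * p)) =
      ENNReal.ofReal (3 / 2) ^ (σ * p) * (K : ℝ≥0∞) ^ (σ * p) * ‖a - z‖ₑ ^ (-(σ * p)) := by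
    rw [show (M : ℝ) - ((M : ℝ) + σ * p) = -(σ * p) by ring, ht,
      ENNReal.ofReal_div_of_pos (by positivity), ofReal_norm,
      ENNReal.ofReal_mul (by norm_num), ENNReal.ofReal_coe_nnreal, div_eq_mul_inv,
      ENNReal.mul_rpow_of_ne_top (by simp) (by simp [hKe]), ENNReal.inv_rpow,
      ENNReal.rpow_neg (_ * _), inv_inv, ENNReal.mul_rpow_of_nonneg _ _ hsp.le]
    ring
  rw [e1, div_eq_mul_inv (_ ^ p), ← ENNReal.rpow_neg, neg_add, ENNReal.rpow_add _ _ hDe (by simp)]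
  ring

lemma fd_main (m M : ℕ) (σ p c : ℝ) (hσ0 : 0 < σ) (hp : 1 ≤ p) (hc : 0 < c) (C : ℝ≥0∞)
    (hC : ∀ t : ℝ, 0 < t → ∫⁻ v : Eucl M, (if t < ‖v‖ then ‖v‖ₑ ^ (-((M : ℝ) + σ * p)) else 0)
      ≤ C * ENNReal.ofReal t ^ ((M : ℝ) - ((M : ℝ) + σ * p)))
    (Ω : Set (Eucl m)) (hΩ : IsOpen Ω)
    (hreg : ∀ z ∈ Ω, ∀ lam : ℝ, 0 < lam → 2 * ENNReal.ofReal lam ≤ EMetric.diam Ω →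
          ENNReal.ofReal (c * lam ^ m) ≤ volume (Metric.ball z lam ∩ Ω))
    (u : Eucl m → ℝ) (hu : Measurable u) (ω : Set (Eucl M)) (hω : IsOpen ω)
    (γ : Eucl M → Eucl m) (hγm : Measurable γ) (K : ℝ≥0) (hγ : LipschitzOnWith K γ ω)
    (hmaps : ∀ x ∈ ω, γ x ∈ Ω) :
    gagliardoPow M σ p ω (fun y => u (γ y)) ≤
      (2 * (2 ^ (p - 1) * ENNReal.ofReal (3 ^ m / c)) * (C * ENNReal.ofReal (3 / 2) ^ (σ * p))) *
        (K : ℝ≥0∞) ^ (σ * p) * ∫⁻ y in ω, fugledeDetector m σ p Ω u (γ y) := by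
  set C1 : ℝ≥0∞ := 2 ^ (p - 1) * ENNReal.ofReal (3 ^ m / c) with hC1
  set C2 : ℝ≥0∞ := C * ENNReal.ofReal (3 / 2) ^ (σ * p) with hC2
  set r : ℝ := (M : ℝ) + σ * p with hr
  set H : Eucl M → Eucl M → ℝ≥0∞ := fun x y =>
    fdG m p Ω u (γ x) (K * ‖x - y‖) * ‖x - y‖ₑ ^ (-r) with hH
  have hHm : Measurable (Function.uncurry H) := by
    have h1 : Measurable (fun q : Eucl M × Eucl M => fdG m p Ω u (γ q.1) (K * ‖q.1 - q.2‖)) :=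
      fd_meas_G m p Ω u hu _ _ (hγm.comp measurable_fst) (by fun_prop)
    have h2 : Measurable (fun q : Eucl M × Eucl M => ‖q.1 - q.2‖ₑ ^ (-r)) := by fun_prop
    exact h1.mul h2
  have hC1t : C1 ≠ ⊤ := ENNReal.mul_ne_top
    (ENNReal.rpow_ne_top_of_nonneg (by linarith) (by simp)) (by simp)
  have hHs : ∀ x, Measurable (H x) := fun x => hHm.of_uncurry_left
  have hpt : ∀ x ∈ ω, ∀ y ∈ ω, (‖u (γ x) - u (γ y)‖₊ : ℝ≥0∞) ^ p / (‖x - y‖₊ : ℝ≥0∞) ^ r ≤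
      C1 * (H x y + H y x) := by
    intro x hx y hy
    simp only [← enorm_eq_nnnorm]
    have hL : ‖γ x - γ y‖ ≤ K * ‖x - y‖ := by
      simpa [dist_eq_norm] using hγ.dist_le_mul x hx y hy
    have := fd_avg m p c hp hc Ω hΩ hreg u hu (γ x) (γ y) (hmaps x hx) (hmaps y hy) _ hL
    rw [div_eq_mul_inv, ← ENNReal.rpow_neg]
    refine (mul_le_mul_left this _).trans (le_of_eq ?_)
    simp only [hH]
    rw [norm_sub_rev y x, ← neg_sub x y, enorm_neg]
    ring
  have hswap : ∫⁻ x in ω, ∫⁻ y in ω, H y x = ∫⁻ x in ω, ∫⁻ y in ω, H x y :=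
    (lintegral_lintegral_swap hHm.aemeasurable).symm
  calc gagliardoPow M σ p ω (fun y => u (γ y))
      ≤ ∫⁻ x in ω, ∫⁻ y in ω, C1 * (H x y + H y x) :=
        setLIntegral_mono' hω.measurableSet fun x hx =>
          setLIntegral_mono' hω.measurableSet fun y hy => hpt x hx y hy
    _ = C1 * (∫⁻ x in ω, ∫⁻ y in ω, H x y + H y x) := by
        simp_rw [lintegral_const_mul' _ _ hC1t]
    _ = C1 * (2 * ∫⁻ x in ω, ∫⁻ y in ω, H x y) := by
        simp_rw [fun x => lintegral_add_left (μ := volume.restrict ω) (hHs x) (fun y => H y x)]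
        have hHi : Measurable (fun x => ∫⁻ y in ω, H x y) := hHm.lintegral_prod_right'
        rw [lintegral_add_left hHi, hswap, two_mul]
    _ ≤ C1 * (2 * ∫⁻ x in ω, (C2 * (K : ℝ≥0∞) ^ (σ * p)) * fugledeDetector m σ p Ω u (γ x)) := by
        gcongr with x
        exact (setLIntegral_le_lintegral _ _).trans
          (fd_int m M σ p hσ0 hp C hC Ω u hu (γ x) K x)
    _ = _ := by
        rw [lintegral_const_mul]
        · ring
        have : Measurable (fun q : Eucl M × Eucl m =>
          (‖u (γ q.1) - u q.2‖ₑ : ℝ≥0∞) ^ p / ‖γ q.1 - q.2‖ₑ ^ ((m : ℝ) + σ * p)) := by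
          fun_prop
        exact this.lintegral_prod_right'

/-- **Fuglede-type detector for fractional Sobolev regularity under composition.**
Let `m, M ≥ 1`, `0 < σ < 1`, `1 ≤ p < ∞`, `c > 0`. There is `C > 0` depending only on
`m, M, σ, p, c` such that: for every open `Ω ⊆ ℝ^m` with `|B_λ(z) ∩ Ω| ≥ c λ^m` for all
`z ∈ Ω` and `0 < λ ≤ (1/2) diam Ω`, every measurable `u : Ω → ℝ` with detector `w`, every
open `ω ⊆ ℝ^M` and every Lipschitz `γ : ω → Ω` (with Lipschitz constant `K`) such that
`w ∘ γ` is summable on `ω`, one has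
`|u ∘ γ|_{W^{σ,p}(ω)} ≤ C K^σ (∫_ω w ∘ γ)^{1/p}`. -/
theorem fuglede_detector_fractional
    (m M : ℕ) (hm : 1 ≤ m) (hM : 1 ≤ M) (σ p c : ℝ)
    (hσ0 : 0 < σ) (hσ1 : σ < 1) (hp : 1 ≤ p) (hc : 0 < c) :
    ∃ C : ℝ, 0 < C ∧
      ∀ (Ω : Set (Eucl m)), IsOpen Ω →
        (∀ z ∈ Ω, ∀ lam : ℝ, 0 < lam → 2 * ENNReal.ofReal lam ≤ EMetric.diam Ω →
          ENNReal.ofReal (c * lam ^ m) ≤ volume (Metric.ball z lam ∩ Ω)) →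
        ∀ u : Eucl m → ℝ, Measurable u →
          ∀ (ω : Set (Eucl M)), IsOpen ω →
            ∀ (γ : Eucl M → Eucl m) (K : ℝ≥0), LipschitzOnWith K γ ω →
              (∀ x ∈ ω, γ x ∈ Ω) →
              (∫⁻ y in ω, fugledeDetector m σ p Ω u (γ y)) < ⊤ →
              gagliardoSeminorm M σ p ω (fun y => u (γ y)) ≤
                ENNReal.ofReal C * (K : ℝ≥0∞) ^ σ *
                  (∫⁻ y in ω, fugledeDetector m σ p Ω u (γ y)) ^ (1 / p) := by
  have hσp : 0 < σ * p := by positivity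
  obtain ⟨C, hCt, hC⟩ := fd_tail M ((M : ℝ) + σ * p) (by linarith)
  set A : ℝ≥0∞ := 2 * (2 ^ (p - 1) * ENNReal.ofReal (3 ^ m / c)) *
    (C * ENNReal.ofReal (3 / 2) ^ (σ * p)) with hA
  have hAt : A ≠ ⊤ := by
    refine ENNReal.mul_ne_top (ENNReal.mul_ne_top (by simp) (ENNReal.mul_ne_top ?_ (by simp)))
      (ENNReal.mul_ne_top hCt ?_)
    · exact ENNReal.rpow_ne_top_of_nonneg (by linarith) (by simp)
    · exact ENNReal.rpow_ne_top_of_nonneg hσp.le (by simp)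
  have hp1 : 0 ≤ 1 / p := by positivity
  have hBt : A ^ (1 / p) ≠ ⊤ := ENNReal.rpow_ne_top_of_nonneg hp1 hAt
  refine ⟨(A ^ (1 / p)).toReal + 1, by positivity, ?_⟩
  intro Ω hΩ hreg u hu ω hω γ K hγ hmaps _
  classical
  set γ' : Eucl M → Eucl m := ω.piecewise γ (fun _ => 0) with hγ'
  have hγ'm : Measurable γ' :=
    hγ.continuousOn.measurable_piecewise continuousOn_const hω.measurableSet
  have heq : ∀ x ∈ ω, γ' x = γ x := fun x hx => Set.piecewise_eq_of_mem _ _ _ hx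
  have hmain := fd_main m M σ p c hσ0 hp hc C hC Ω hΩ hreg u hu ω hω γ' hγ'm K
    (by
      intro x hx y hy
      rw [heq x hx, heq y hy]
      exact hγ hx hy)
    (fun x hx => by rw [heq x hx]; exact hmaps x hx)
  have e1 : gagliardoPow M σ p ω (fun y => u (γ' y)) =
      gagliardoPow M σ p ω (fun y => u (γ y)) := by
    unfold gagliardoPow
    refine setLIntegral_congr_fun hω.measurableSet fun x hx => ?_
    refine setLIntegral_congr_fun hω.measurableSet fun y hy => ?_
    simp only [heq x hx, heq y hy]
  have e2 : ∫⁻ y in ω, fugledeDetector m σ p Ω u (γ' y) =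
      ∫⁻ y in ω, fugledeDetector m σ p Ω u (γ y) :=
    setLIntegral_congr_fun hω.measurableSet fun x hx => by simp only [heq x hx]
  rw [e1, e2, ← hA] at hmain
  unfold gagliardoSeminorm
  refine (ENNReal.rpow_le_rpow hmain hp1).trans ?_
  rw [ENNReal.mul_rpow_of_nonneg _ _ hp1, ENNReal.mul_rpow_of_nonneg _ _ hp1, ← ENNReal.rpow_mul,
    show σ * p * (1 / p) = σ by field_simp]
  gcongr
  rw [← ENNReal.ofReal_toReal hBt]
  apply ENNReal.ofReal_le_ofReal
  simp
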